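/- Let L ⊆ ℂᴺ be compact, B ⊆ ℂⁿ a closed ball centred at 0, and S ⊆ ℂ^{N+n} compact with (L × B) ∪ S polynomially convex and S ∩ (L × B) = ∅. Then for every t ∈ [1, ∞), with θ_t(z,ζ) = (z, tζ), the set (L × B) ∪ θ_t(S) is polynomially convex and θ_t(S) ∩ (L × B) = ∅, provided S ∩ (L × tB) = ∅. -/

import Mathlib

noncomputable section
open Set Metric MvPolynomial

/-- The polynomially convex hull of a set in `ℂⁿ`. -/
def polyHull {n : ℕ} (K : Set (EuclideanSpace ℂ (Fin n))) : Set (EuclideanSpace ℂ (Fin n)) :=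
  {z | ∀ p : MvPolynomial (Fin n) ℂ,
    ‖eval (fun i => z i) p‖ ≤ sSup ((fun w => ‖eval (fun i => w i) p‖) '' K)}

/-- A compact set in `ℂⁿ` is polynomially convex if it equals its polynomial hull. -/
def IsPolyConvex {n : ℕ} (K : Set (EuclideanSpace ℂ (Fin n))) : Prop :=
  polyHull K = K

/-- Polynomial hull for subsets of a product `ℂᴺ × ℂⁿ ≅ ℂ^{N+n}`, using polynomials in the
`N + n` coordinates. -/
def polyHull2 {N n : ℕ} (S : Set (EuclideanSpace ℂ (Fin N) × EuclideanSpace ℂ (Fin n))) :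
    Set (EuclideanSpace ℂ (Fin N) × EuclideanSpace ℂ (Fin n)) :=
  {z | ∀ p : MvPolynomial (Fin N ⊕ Fin n) ℂ,
    ‖eval (Sum.elim (fun i => z.1 i) (fun j => z.2 j)) p‖ ≤
      sSup ((fun w => ‖eval (Sum.elim (fun i => w.1 i) (fun j => w.2 j)) p‖) '' S)}

def IsPolyConvex2 {N n : ℕ} (S : Set (EuclideanSpace ℂ (Fin N) × EuclideanSpace ℂ (Fin n))) :
    Prop :=
  polyHull2 S = S

section PolynomialSeparation

open WeakDual Filter Topology

theorem catalan_le_four_pow (n : ℕ) : catalan n ≤ 4 ^ n := by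
  rw [catalan_eq_centralBinom_div]
  exact (Nat.div_le_self _ _).trans (Nat.centralBinom_le_four_pow n)

theorem summable_norm_catalan_smul_pow {B : Type*} [NormedCommRing B] [NormedAlgebra ℂ B]
    [CompleteSpace B] (x : B) (hx : ∀ φ : characterSpace ℂ B, ‖φ x‖ ≤ 1 / 8) :
    Summable fun n : ℕ => ‖(catalan n : ℂ) • x ^ n‖ := by
  have hrad : spectralRadius ℂ x < ENNReal.ofReal (1 / 6) := by
    refine lt_of_le_of_lt (b := ENNReal.ofReal (1 / 8)) ?_
      (by rw [ENNReal.ofReal_lt_ofReal_iff] <;> norm_num)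
    refine iSup₂_le fun k hk => ?_
    obtain ⟨φ, rfl⟩ := CharacterSpace.mem_spectrum_iff_exists.1 hk
    rw [← enorm_eq_nnnorm, ← ofReal_norm]
    exact ENNReal.ofReal_le_ofReal (hx φ)
  have hev := (spectrum.pow_norm_pow_one_div_tendsto_nhds_spectralRadius x).eventually_lt_const hrad
  have hgeo : Summable fun n : ℕ => ((2 : ℝ) / 3) ^ n :=
    summable_geometric_of_lt_one (by norm_num) (by norm_num)
  refine hgeo.of_norm_bounded_eventually_nat ?_
  filter_upwards [hev, eventually_gt_atTop 0] with n hn hpos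
  rw [ENNReal.ofReal_lt_ofReal_iff (by norm_num)] at hn
  have h1 : ‖x ^ n‖ ≤ (1 / 6 : ℝ) ^ n := by
    have h2 : (‖x ^ n‖ ^ (1 / n : ℝ)) ^ n = ‖x ^ n‖ := by
      rw [one_div]
      exact Real.rpow_inv_natCast_pow (norm_nonneg _) hpos.ne'
    rw [← h2]
    gcongr
  have h3 : (catalan n : ℝ) ≤ 4 ^ n := by exact_mod_cast catalan_le_four_pow n
  rw [norm_norm, norm_smul, Complex.norm_natCast]
  calc (catalan n : ℝ) * ‖x ^ n‖ ≤ 4 ^ n * (1 / 6 : ℝ) ^ n := by gcongr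
    _ = (2 / 3) ^ n := by rw [← mul_pow]; norm_num

theorem exists_sub_sq_eq_of_character_small {B : Type*} [NormedCommRing B] [NormedAlgebra ℂ B]
    [CompleteSpace B] (x : B) (hx : ∀ φ : characterSpace ℂ B, ‖φ x‖ ≤ 1 / 8) :
    ∃ y : B, y - y ^ 2 = x ∧ ∀ φ : characterSpace ℂ B, ‖φ y‖ ≤ 1 / 4 := by
  have hs := summable_norm_catalan_smul_pow x hx
  set c : ℕ → B := fun n => (catalan n : ℂ) • x ^ n with hc
  have hcs : Summable c := hs.of_norm
  have hquad : ∑' n, c n = 1 + x * (∑' n, c n) ^ 2 := by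
    rw [sq, tsum_mul_tsum_eq_tsum_sum_antidiagonal_of_summable_norm hs hs,
      ← (summable_norm_sum_mul_antidiagonal_of_summable_norm hs hs).of_norm.tsum_mul_left,
      hcs.tsum_eq_zero_add]
    congr 1
    · simp [hc]
    · refine tsum_congr fun n => ?_
      simp only [hc, catalan_succ', Nat.cast_sum, Nat.cast_mul, Finset.sum_smul, Finset.mul_sum]
      refine Finset.sum_congr rfl fun ij hij => ?_
      rw [Finset.HasAntidiagonal.mem_antidiagonal] at hij
      rw [smul_mul_smul_comm, ← pow_add, hij, mul_smul_comm, pow_succ']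
  refine ⟨x * ∑' n, c n, ?_, fun φ => ?_⟩
  · linear_combination x * hquad
  · have hφ : φ (∑' n, c n) = ∑' n, φ (c n) :=
      (CharacterSpace.toCLM φ).map_tsum hcs
    have hb : ‖∑' n, φ (c n)‖ ≤ 2 := by
      refine tsum_of_norm_bounded (g := fun n => (1 / 2 : ℝ) ^ n) hasSum_geometric_two fun n => ?_
      have h3 : (catalan n : ℝ) ≤ 4 ^ n := by exact_mod_cast catalan_le_four_pow n
      simp only [hc, map_smul, map_pow, norm_smul, norm_pow, Complex.norm_natCast]
      calc (catalan n : ℝ) * ‖φ x‖ ^ n ≤ 4 ^ n * (1 / 8 : ℝ) ^ n := by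
            gcongr
            exact hx φ
        _ = (1 / 2) ^ n := by rw [← mul_pow]; norm_num
    rw [map_mul, hφ, norm_mul]
    calc _ ≤ (1 / 8 : ℝ) * 2 := by gcongr; exact hx φ
      _ = 1 / 4 := by norm_num

theorem norm_sub_lt_one_of_quotient {f y v : ℂ} (hv : v = 0 ∨ v = 1) (hf : ‖f - v‖ ≤ 1 / 10)
    (hy : ‖y‖ ≤ 1 / 4) : ‖(f - y) * (1 - 2 * y)⁻¹ - v‖ < 1 := by
  have hden : 1 / 2 ≤ ‖1 - 2 * y‖ := by
    have h := norm_sub_norm_le (1 : ℂ) (2 * y)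
    rw [norm_mul, norm_one, Complex.norm_two] at h
    linarith
  have hne : 1 - 2 * y ≠ 0 := norm_pos_iff.1 (by linarith)
  have heq : (f - y) * (1 - 2 * y)⁻¹ - v = ((f - v) - (1 - 2 * v) * y) / (1 - 2 * y) := by
    rw [eq_div_iff hne, sub_mul, mul_assoc, inv_mul_cancel₀ hne]
    ring
  have hs : ‖1 - 2 * v‖ = 1 := by rcases hv with rfl | rfl <;> norm_num
  rw [heq, norm_div, div_lt_one (by linarith)]
  refine (norm_sub_le _ _).trans_lt ?_
  rw [norm_mul, hs]
  linarith

theorem eq_of_sq_eq_self_of_norm_sub_lt_one {z v : ℂ} (hz : z ^ 2 - z = 0) (hv : v = 0 ∨ v = 1)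
    (h : ‖z - v‖ < 1) : z = v := by
  have hz' : z * (z - 1) = 0 := by linear_combination hz
  rcases mul_eq_zero.1 hz' with h0 | h1 <;> rcases hv with rfl | rfl
  · exact h0
  · simp [h0] at h
  · rw [sub_eq_zero] at h1; simp [h1] at h
  · exact sub_eq_zero.1 h1

section BanachAlgebra

variable {A : Type*} [NormedCommRing A] [NormedAlgebra ℂ A] [CompleteSpace A]

theorem isUnit_of_character_ne_zero {x : A} (hx : ∀ φ : characterSpace ℂ A, φ x ≠ 0) :
    IsUnit x := by
  by_contra h
  obtain ⟨φ, hφ⟩ := CharacterSpace.exists_apply_eq_zero h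
  exact hx φ hφ

/-- An element with `f - f ^ 2` spectrally small is spectrally close to an idempotent. -/
theorem exists_idempotent_of_character_near {f : A}
    (hf : ∀ φ : characterSpace ℂ A, ∃ v : ℂ, (v = 0 ∨ v = 1) ∧ ‖φ f - v‖ ≤ 1 / 10) :
    ∃ e : A, e ^ 2 - e = 0 ∧ ∀ (φ : characterSpace ℂ A) (v : ℂ), (v = 0 ∨ v = 1) →
      ‖φ f - v‖ ≤ 1 / 10 → φ e = v := by
  obtain ⟨y, hy, hyφ⟩ := exists_sub_sq_eq_of_character_small (f - f ^ 2) fun φ => by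
    obtain ⟨v, hv, h⟩ := hf φ
    have hs : ‖1 - 2 * v‖ = 1 := by rcases hv with rfl | rfl <;> norm_num
    have heq : φ (f - f ^ 2) = (1 - 2 * v) * (φ f - v) - (φ f - v) ^ 2 := by
      rw [map_sub, map_pow]
      rcases hv with rfl | rfl <;> ring
    rw [heq]
    refine (norm_sub_le _ _).trans ?_
    rw [norm_mul, hs, norm_pow]
    nlinarith [norm_nonneg (φ f - v)]
  have hu : IsUnit (1 - 2 * y) := isUnit_of_character_ne_zero fun φ h0 => by
    have h1 := hyφ φ
    rw [map_sub, map_one, map_mul, map_ofNat] at h0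
    have h2 : φ y = 1 / 2 := by linear_combination -h0 / 2
    rw [h2] at h1
    norm_num at h1
  obtain ⟨u, hu⟩ := hu
  have huinv : (1 - 2 * y) * (↑u⁻¹ : A) = 1 := by rw [← hu, Units.mul_inv]
  have he : ((f - y) * (↑u⁻¹ : A)) ^ 2 - (f - y) * (↑u⁻¹ : A) = 0 := by
    linear_combination (f - y) * (↑u⁻¹ : A) * huinv + (↑u⁻¹ : A) ^ 2 * hy
  refine ⟨(f - y) * (↑u⁻¹ : A), he, fun φ v hv h => ?_⟩
  refine eq_of_sq_eq_self_of_norm_sub_lt_one ?_ hv ?_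
  · rw [← map_pow, ← map_sub, he, map_zero]
  · have h1 := congrArg φ huinv
    rw [map_mul, map_sub, map_mul, map_one, map_ofNat] at h1
    rw [map_mul, map_sub, eq_inv_of_mul_eq_one_right h1]
    exact norm_sub_lt_one_of_quotient hv h (hyφ φ)

/-- If `f` is close to `0` or `1` on the fibre `φ a = c`, then it can be corrected to an idempotent
modulo the closure of the ideal generated by `c - a`. -/
theorem exists_idempotent_mod_sub {a f : A} {c : ℂ} {v : characterSpace ℂ A → ℂ}
    (hv : ∀ φ, v φ = 0 ∨ v φ = 1)
    (hf : ∀ φ : characterSpace ℂ A, φ a = c → ‖φ f - v φ‖ ≤ 1 / 10) :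
    ∃ e : A, (∀ φ : characterSpace ℂ A, φ a = c → φ e = v φ) ∧
      ∀ δ > 0, ∃ h s : A, e ^ 2 - e = (algebraMap ℂ A c - a) * h + s ∧ ‖s‖ < δ := by
  let I : Ideal A := (Ideal.span {algebraMap ℂ A c - a}).closure
  have : IsClosed (I : Set A) := isClosed_closure
  have hmem : algebraMap ℂ A c - a ∈ I :=
    subset_closure (Ideal.mem_span_singleton_self _)
  have hpull (ψ : characterSpace ℂ (A ⧸ I)) : ∃ φ : characterSpace ℂ A, φ a = c ∧
      ∀ x, φ x = ψ (Ideal.Quotient.mk I x) := by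
    refine ⟨CharacterSpace.equivAlgHom.symm
      ((CharacterSpace.equivAlgHom ψ).comp (Ideal.Quotient.mkₐ ℂ I)), ?_, fun x => rfl⟩
    have h : ψ (Ideal.Quotient.mk I (algebraMap ℂ A c - a)) = 0 := by
      rw [Ideal.Quotient.eq_zero_iff_mem.2 hmem, map_zero]
    have h2 : ψ (Ideal.Quotient.mk I (algebraMap ℂ A c)) = c :=
      AlgHomClass.commutes ψ c
    rw [map_sub, map_sub, h2, sub_eq_zero] at h
    exact h.symm
  have hpush (φ : characterSpace ℂ A) (hφ : φ a = c) : ∃ ψ : characterSpace ℂ (A ⧸ I),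
      ∀ x, φ x = ψ (Ideal.Quotient.mk I x) := by
    have hker : ∀ x ∈ I, CharacterSpace.equivAlgHom φ x = 0 := by
      have hcl : IsClosed {x : A | φ x = 0} := isClosed_eq (map_continuous φ) continuous_const
      intro x hx
      refine closure_minimal ?_ hcl hx
      intro x hx
      obtain ⟨y, rfl⟩ := Ideal.mem_span_singleton'.1 hx
      have : φ (algebraMap ℂ A c) = c := AlgHomClass.commutes φ c
      simp [hφ, this]
    exact ⟨CharacterSpace.equivAlgHom.symm
      (Ideal.Quotient.liftₐ I (CharacterSpace.equivAlgHom φ) hker), fun x => rfl⟩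
  obtain ⟨e', he', heφ⟩ := exists_idempotent_of_character_near (f := Ideal.Quotient.mk I f)
    fun ψ => by
      obtain ⟨φ, hφ, h⟩ := hpull ψ
      exact ⟨v φ, hv φ, h f ▸ hf φ hφ⟩
  obtain ⟨e, rfl⟩ := Ideal.Quotient.mk_surjective e'
  refine ⟨e, fun φ hφ => ?_, fun δ hδ => ?_⟩
  · obtain ⟨ψ, h⟩ := hpush φ hφ
    rw [h e]
    exact heφ ψ (v φ) (hv φ) (h f ▸ hf φ hφ)
  · rw [← map_pow, ← map_sub, Ideal.Quotient.eq_zero_iff_mem] at he'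
    obtain ⟨b, hb, hbe⟩ := Metric.mem_closure_iff.1 he' δ hδ
    obtain ⟨h, rfl⟩ := Ideal.mem_span_singleton.1 hb
    exact ⟨h, e ^ 2 - e - (algebraMap ℂ A c - a) * h, by ring, by rwa [← dist_eq_norm]⟩

theorem exists_differentiable_sub_sq_eq : ∃ G : A → A, G 0 = 0 ∧ ContinuousAt G 0 ∧
    ∀ᶠ u in 𝓝 (0 : A), G u - G u ^ 2 = u ∧ DifferentiableAt ℂ G u := by
  have hF : ContDiffAt ℂ 1 (fun y : A => y - y ^ 2) 0 := by fun_prop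
  have hF' : HasFDerivAt (fun y : A => y - y ^ 2)
      ((ContinuousLinearEquiv.refl ℂ A : A ≃L[ℂ] A) : A →L[ℂ] A) 0 := by
    have h := (hasFDerivAt_id (𝕜 := ℂ) (0 : A)).sub ((hasFDerivAt_id (𝕜 := ℂ) (0 : A)).pow 2)
    refine h.congr_fderiv ?_
    ext y
    simp
  have h0 : (0 : A) - 0 ^ 2 = 0 := by simp
  have hG := hF.to_localInverse hF' one_ne_zero
  have hG0 := hF.localInverse_apply_image hF' one_ne_zero
  have hright := (hF.hasStrictFDerivAt' hF' one_ne_zero).eventually_right_inverse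
  rw [h0] at hG hG0 hright
  refine ⟨_, hG0, hG.continuousAt, hright.and ?_⟩
  filter_upwards [hG.eventually (by simp)] with u hu using hu.differentiableAt one_ne_zero

theorem norm_character_apply_le (φ : characterSpace ℂ A) (x : A) : ‖φ x‖ ≤ ‖x‖ * ‖(1 : A)‖ :=
  AlgHom.norm_apply_le_self_mul_norm_one (CharacterSpace.toAlgHom φ) x

/-- A function on the fibre of `a` over `c` that is close to `v` is close to `v` on nearby fibres. -/
theorem exists_ball_character_near {a e : A} {c : ℂ} {v : characterSpace ℂ A → ℂ}
    (hvc : Continuous v) (he : ∀ φ : characterSpace ℂ A, φ a = c → φ e = v φ) :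
    ∀ᶠ w in 𝓝 c, ∀ φ : characterSpace ℂ A, φ a = w → ‖φ e - v φ‖ ≤ 1 / 10 := by
  have hev (x : A) : Continuous fun φ : characterSpace ℂ A => φ x :=
    (WeakDual.eval_continuous x).comp continuous_subtype_val
  let T : Set (characterSpace ℂ A) := {φ | 1 / 10 ≤ ‖φ e - v φ‖}
  have hT : IsCompact T := (isClosed_le continuous_const ((hev e).sub hvc).norm).isCompact
  have hc : c ∉ (fun φ : characterSpace ℂ A => φ a) '' T := by
    rintro ⟨φ, hφT, hφ⟩
    have h : (1 : ℝ) / 10 ≤ ‖φ e - v φ‖ := hφT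
    rw [he φ hφ, sub_self, norm_zero] at h
    norm_num at h
  filter_upwards [(hT.image (hev a)).isClosed.isOpen_compl.mem_nhds hc] with w hw φ hφ
  by_contra! h
  exact hw ⟨φ, h.le, hφ⟩

/-- A holomorphic family of idempotents modulo `w - a`, near a point `c`, with prescribed values at
the characters. -/
theorem exists_local_idempotent {a f : A} {c : ℂ} {v : characterSpace ℂ A → ℂ}
    (hv : ∀ φ, v φ = 0 ∨ v φ = 1) (hvc : Continuous v)
    (hf : ∀ φ : characterSpace ℂ A, φ a = c → ‖φ f - v φ‖ ≤ 1 / 10) :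
    ∃ (e q : ℂ → A) (V : Set ℂ), IsOpen V ∧ c ∈ V ∧ Bornology.IsBounded V ∧
      DifferentiableOn ℂ e V ∧ ContinuousOn q V ∧
      (∀ w ∈ V, e w ^ 2 - e w = (algebraMap ℂ A w - a) * q w) ∧
      ∀ φ : characterSpace ℂ A, φ a ∈ V → φ (e (φ a)) = v φ := by
  obtain ⟨e₀, he₀, hs⟩ := exists_idempotent_mod_sub hv hf
  obtain ⟨G, hG0, hGc, hG⟩ := exists_differentiable_sub_sq_eq (A := A)
  have hunit : ∀ᶠ u in 𝓝 (0 : A), IsUnit (1 - 2 * G u) := by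
    have h : ContinuousAt (fun u => 1 - 2 * G u) 0 := by fun_prop
    refine h.eventually (Units.isOpen.mem_nhds ?_)
    simp [hG0]
  have hsmall : ∀ᶠ u in 𝓝 (0 : A), ‖G u‖ * ‖(1 : A)‖ ≤ 1 / 4 := by
    have h : ContinuousAt (fun u => ‖G u‖ * ‖(1 : A)‖) 0 := by fun_prop
    exact h.eventually (ge_mem_nhds (by simp [hG0]))
  obtain ⟨δ, hδ, hball⟩ := Metric.eventually_nhds_iff_ball.1 (hG.and (hunit.and hsmall))
  obtain ⟨h, s, hhs, hsδ⟩ := hs δ hδ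
  let S : ℂ → A := fun w => -(s + (algebraMap ℂ A c - algebraMap ℂ A w) * h)
  have hSd : Differentiable ℂ S := by
    have : Differentiable ℂ (fun w : ℂ => algebraMap ℂ A w) :=
      (Algebra.linearMap ℂ A).toContinuousLinearMap.differentiable
    fun_prop
  have hSev : ∀ᶠ w in 𝓝 c, S w ∈ ball (0 : A) δ := by
    refine hSd.continuous.continuousAt.eventually (isOpen_ball.mem_nhds ?_)
    simpa [S] using hsδ
  obtain ⟨ρ, hρ, hρball⟩ := Metric.eventually_nhds_iff_ball.1
    (hSev.and (exists_ball_character_near hvc he₀))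
  have hd : DifferentiableOn ℂ (fun w => G (S w)) (ball c ρ) := fun w hw =>
    ((hball _ (hρball w hw).1).1.2.comp w (hSd w)).differentiableWithinAt
  have hinv : DifferentiableOn ℂ (fun w => Ring.inverse (1 - 2 * G (S w))) (ball c ρ) := by
    intro w hw
    have hu := (hball _ (hρball w hw).1).2.1
    have hden : DifferentiableWithinAt ℂ (fun w => 1 - 2 * G (S w)) (ball c ρ) w :=
      (differentiableWithinAt_const 1).sub ((differentiableWithinAt_const 2).mul (hd w hw))
    exact DifferentiableAt.comp_differentiableWithinAt (f := fun w => 1 - 2 * G (S w)) w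
      (differentiableAt_inverse hu) hden
  have hcancel (w) (hw : w ∈ ball c ρ) :
      (1 - 2 * G (S w)) * Ring.inverse (1 - 2 * G (S w)) = 1 :=
    Ring.mul_inverse_cancel _ (hball _ (hρball w hw).1).2.1
  have hmain (w) (hw : w ∈ ball c ρ) :
      ((e₀ - G (S w)) * Ring.inverse (1 - 2 * G (S w))) ^ 2 -
        (e₀ - G (S w)) * Ring.inverse (1 - 2 * G (S w)) =
      (algebraMap ℂ A w - a) * (h * Ring.inverse (1 - 2 * G (S w)) ^ 2) := by
    have h1 := (hball _ (hρball w hw).1).1.1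
    have h2 := hcancel w hw
    have h3 : S w = -(s + (algebraMap ℂ A c - algebraMap ℂ A w) * h) := rfl
    set r := Ring.inverse (1 - 2 * G (S w))
    linear_combination (e₀ - G (S w)) * r * h2 + r ^ 2 * h1 + r ^ 2 * h3 + r ^ 2 * hhs
  refine ⟨fun w => (e₀ - G (S w)) * Ring.inverse (1 - 2 * G (S w)),
    fun w => h * Ring.inverse (1 - 2 * G (S w)) ^ 2, ball c ρ, isOpen_ball, mem_ball_self hρ,
    isBounded_ball, ?_, ?_, hmain, fun φ hφ => ?_⟩
  · exact ((differentiableOn_const e₀).sub hd).mul hinv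
  · have := hinv.continuousOn
    fun_prop
  · refine eq_of_sq_eq_self_of_norm_sub_lt_one ?_ (hv φ) ?_
    · rw [← map_pow, ← map_sub, hmain _ hφ, map_mul, map_sub, AlgHomClass.commutes]
      simp
    · have h1 := congrArg φ (hcancel _ hφ)
      rw [map_mul, map_sub, map_mul, map_one, map_ofNat] at h1
      simp only
      rw [map_mul, map_sub, eq_inv_of_mul_eq_one_right h1]
      exact norm_sub_lt_one_of_quotient (hv φ) ((hρball _ hφ).2 φ rfl)
        ((norm_character_apply_le φ _).trans (hball _ (hρball _ hφ).1).2.2)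

/-- Two families of idempotents modulo `w - a` with the same values at the characters over `w₀`
agree modulo `w - a` near `w₀`. -/
theorem exists_local_quotient {a : A} {w₀ : ℂ} {e₁ e₂ q₁ q₂ : ℂ → A} {V : Set ℂ} (hV : V ∈ 𝓝 w₀)
    (he₁ : ContinuousOn e₁ V) (he₂ : ContinuousOn e₂ V)
    (hq₁ : ContinuousOn q₁ V) (hq₂ : ContinuousOn q₂ V)
    (h₁ : ∀ w ∈ V, e₁ w ^ 2 - e₁ w = (algebraMap ℂ A w - a) * q₁ w)
    (h₂ : ∀ w ∈ V, e₂ w ^ 2 - e₂ w = (algebraMap ℂ A w - a) * q₂ w)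
    (hφ : ∀ φ : characterSpace ℂ A, φ a = w₀ → φ (e₁ w₀) = φ (e₂ w₀)) :
    ∃ (m : ℂ → A) (W : Set ℂ), IsOpen W ∧ w₀ ∈ W ∧ ContinuousOn m W ∧
      ∀ w ∈ W, e₁ w - e₂ w = (algebraMap ℂ A w - a) * m w := by
  obtain ⟨u, b, hub⟩ : ∃ u b : A,
      u * (1 - (e₁ w₀ - e₂ w₀) ^ 2) + b * (algebraMap ℂ A w₀ - a) = 1 := by
    rw [← Ideal.mem_span_pair, ← Ideal.eq_top_iff_one]
    by_contra hne
    obtain ⟨M, hM, hle⟩ := Ideal.exists_le_maximal _ hne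
    have hz (x) (hx : x ∈ ({1 - (e₁ w₀ - e₂ w₀) ^ 2, algebraMap ℂ A w₀ - a} : Set A)) :
        M.toCharacterSpace x = 0 :=
      M.toCharacterSpace_apply_eq_zero_of_mem (hle (Ideal.subset_span hx))
    have ha := hz _ (Set.mem_insert_of_mem _ rfl)
    rw [map_sub, AlgHomClass.commutes, sub_eq_zero] at ha
    have h1 := hz _ (Set.mem_insert _ _)
    rw [map_sub, map_pow, map_sub, hφ _ ha.symm] at h1
    simp at h1
  have hw : Continuous fun w : ℂ => algebraMap ℂ A w := continuous_algebraMap ℂ A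
  let g : ℂ → A := fun w => u * (1 - (e₁ w - e₂ w) ^ 2) + b * (algebraMap ℂ A w - a)
  have hg : ContinuousOn g V := by fun_prop
  have hunit : ∀ᶠ w in 𝓝 w₀, IsUnit (g w) :=
    (hg.continuousAt hV).eventually (Units.isOpen.mem_nhds (by
      change IsUnit (g w₀)
      simp only [g, hub, isUnit_one]))
  obtain ⟨W, hWs, hWo, hW₀⟩ := _root_.mem_nhds_iff.1 (inter_mem hV hunit)
  have hWV : W ⊆ V := fun w hw => (hWs hw).1
  have hr : ContinuousOn (fun w => Ring.inverse (g w)) W := by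
    intro w hw
    obtain ⟨y, hy⟩ := (hWs hw).2
    exact ContinuousAt.comp_continuousWithinAt
      (hy ▸ NormedRing.inverse_continuousAt y) (hg.mono hWV w hw)
  refine ⟨fun w => (-(q₁ w + q₁ w * e₁ w - 3 * q₁ w * e₂ w + 3 * e₁ w * q₂ w - q₂ w
    - q₂ w * e₂ w) * u + b * (e₁ w - e₂ w)) * Ring.inverse (g w), W, hWo, hW₀, ?_, fun w hw => ?_⟩
  · have := he₁.mono hWV
    have := he₂.mono hWV
    have := hq₁.mono hWV
    have := hq₂.mono hWV
    fun_prop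
  · have hc := Ring.mul_inverse_cancel _ (hWs hw).2
    have hgw : g w = u * (1 - (e₁ w - e₂ w) ^ 2) + b * (algebraMap ℂ A w - a) := rfl
    have e1 := h₁ w (hWV hw)
    have e2 := h₂ w (hWV hw)
    beta_reduce
    set r := Ring.inverse (g w)
    linear_combination -(e₁ w - e₂ w) * hc + (e₁ w - e₂ w) * r * hgw -
      u * r * ((e₁ w + 1 - 3 * e₂ w) * e1 + (3 * e₁ w - e₂ w - 1) * e2)

end BanachAlgebra

/-- The Cauchy-Riemann operator `∂/∂z̄`. -/
def dbar {F : Type*} [NormedAddCommGroup F] [NormedSpace ℂ F] (f : ℂ → F) (w : ℂ) : F :=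
  (1 / 2 : ℂ) • (fderiv ℝ f w 1 + Complex.I • fderiv ℝ f w Complex.I)

section CauchyPompeiu

open MeasureTheory Set

variable {f : ℂ → ℂ} {α : ℂ}

theorem integral_Ioi_radial_fderiv (hf : ContDiff ℝ 1 f) (hs : HasCompactSupport f) (u : ℂ)
    (hu : u ≠ 0) : ∫ r : ℝ in Ioi 0, fderiv ℝ f (α + r * u) u = -f α := by
  have hcl : Topology.IsClosedEmbedding fun r : ℝ => α + r * u := by
    refine (Homeomorph.addLeft α).isClosedEmbedding.comp ?_
    refine (Homeomorph.mulRight₀ u hu).isClosedEmbedding.comp ?_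
    exact Complex.isometry_ofReal.isClosedEmbedding
  have hc : HasCompactSupport fun r : ℝ => f (α + r * u) := hs.comp_isClosedEmbedding hcl
  have hd (r : ℝ) : HasDerivAt (fun r : ℝ => f (α + r * u)) (fderiv ℝ f (α + r * u) u) r := by
    have h1 : HasDerivAt (fun r : ℝ => α + r * u) u r := by
      simpa using ((Complex.ofRealCLM.hasDerivAt (x := r)).mul_const u).const_add α
    exact ((hf.differentiable one_ne_zero) _).hasFDerivAt.comp_hasDerivAt r h1
  have hcont : Continuous fun r : ℝ => fderiv ℝ f (α + r * u) u := by
    have := hf.continuous_fderiv one_ne_zero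
    fun_prop
  have hc' : HasCompactSupport fun r : ℝ => fderiv ℝ f (α + r * u) u := by
    have h := hc.deriv
    rwa [show deriv (fun r : ℝ => f (α + r * u)) = fun r : ℝ => fderiv ℝ f (α + r * u) u from
      funext fun r => (hd r).deriv] at h
  have h := integral_Ioi_of_hasDerivAt_of_tendsto' (a := (0 : ℝ)) (m := 0) (fun r _ => hd r)
    (hcont.integrable_of_hasCompactSupport hc').integrableOn
    (hc.is_zero_at_infty.mono_left atTop_le_cocompact)
  simpa using h

theorem integral_angular_fderiv (hf : ContDiff ℝ 1 f) (r : ℝ) (hr : r ≠ 0) :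
    ∫ θ in Ioo (-Real.pi) Real.pi, fderiv ℝ f (α + r * Complex.exp (θ * Complex.I))
      (Complex.I * Complex.exp (θ * Complex.I)) = 0 := by
  have hd (θ : ℝ) : HasDerivAt (fun θ : ℝ => f (α + r * Complex.exp (θ * Complex.I)))
      (r * fderiv ℝ f (α + r * Complex.exp (θ * Complex.I))
        (Complex.I * Complex.exp (θ * Complex.I))) θ := by
    have h1 : HasDerivAt (fun θ : ℝ => α + r * Complex.exp (θ * Complex.I))
        (r • (Complex.I * Complex.exp (θ * Complex.I))) θ := by
      have := (((Complex.ofRealCLM.hasDerivAt (x := θ)).mul_const Complex.I).cexp.const_mul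
        (r : ℂ)).const_add α
      refine this.congr_deriv ?_
      simp only [Complex.ofRealCLM_apply, Complex.ofReal_one, Complex.real_smul]
      ring
    have h2 := ((hf.differentiable one_ne_zero) _).hasFDerivAt.comp_hasDerivAt θ h1
    rw [map_smul] at h2
    exact h2
  have hcont : Continuous fun θ : ℝ => fderiv ℝ f (α + r * Complex.exp (θ * Complex.I))
      (Complex.I * Complex.exp (θ * Complex.I)) := by
    have := hf.continuous_fderiv one_ne_zero
    fun_prop
  have h := intervalIntegral.integral_eq_sub_of_hasDerivAt (a := -Real.pi) (b := Real.pi)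
    (fun θ _ => hd θ) ((continuous_const.mul hcont).intervalIntegrable _ _)
  rw [intervalIntegral.integral_const_mul, intervalIntegral.integral_of_le (by linarith [Real.pi_pos]),
    integral_Ioc_eq_integral_Ioo] at h
  have h0 : Complex.exp ((-Real.pi : ℝ) * Complex.I) = Complex.exp ((Real.pi : ℝ) * Complex.I) := by
    rw [Complex.ofReal_neg, neg_mul, Complex.exp_neg, Complex.exp_pi_mul_I]
    norm_num
  rw [h0, sub_self] at h
  exact (mul_eq_zero.1 h).resolve_left (by exact_mod_cast hr)

/-- The **Cauchy-Pompeiu formula** for compactly supported functions. -/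
theorem integral_inv_sub_mul_dbar (hf : ContDiff ℝ 1 f) (hs : HasCompactSupport f) :
    ∫ w : ℂ, (w - α)⁻¹ * dbar f w = -Real.pi * f α := by
  rw [← integral_add_left_eq_self (fun w => (w - α)⁻¹ * dbar f w) α,
    ← Complex.integral_comp_polarCoord_symm]
  have hfd := hf.continuous_fderiv one_ne_zero
  let G₁ : ℝ × ℝ → ℂ := fun p => fderiv ℝ f (α + p.1 * Complex.exp (p.2 * Complex.I))
    (Complex.exp (p.2 * Complex.I))
  let G₂ : ℝ × ℝ → ℂ := fun p => fderiv ℝ f (α + p.1 * Complex.exp (p.2 * Complex.I))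
    (Complex.I * Complex.exp (p.2 * Complex.I))
  have hG₁ : Continuous G₁ := by fun_prop
  have hG₂ : Continuous G₂ := by fun_prop
  obtain ⟨R, hR⟩ : ∃ R : ℝ, ∀ p : ℝ × ℝ, R < p.1 →
      fderiv ℝ f (α + p.1 * Complex.exp (p.2 * Complex.I)) = 0 := by
    obtain ⟨R, hR⟩ := (hs.fderiv (𝕜 := ℝ)).isCompact.isBounded.subset_closedBall α
    refine ⟨R, fun p hp => image_eq_zero_of_notMem_tsupport fun hmem => ?_⟩
    have h := hR hmem
    rw [mem_closedBall, dist_eq_norm, add_sub_cancel_left, norm_mul, Complex.norm_exp_ofReal_mul_I,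
      mul_one, Complex.norm_real, Real.norm_eq_abs] at h
    linarith [le_abs_self p.1]
  have hintegrable (G : ℝ × ℝ → ℂ) (hG : Continuous G) (h0 : ∀ p : ℝ × ℝ, R < p.1 → G p = 0) :
      IntegrableOn G (Ioi (0 : ℝ) ×ˢ Ioo (-Real.pi) Real.pi) := by
    have hK : IntegrableOn G (Icc (0 : ℝ) R ×ˢ Icc (-Real.pi) Real.pi) :=
      hG.continuousOn.integrableOn_compact (isCompact_Icc.prod isCompact_Icc)
    refine hK.of_forall_sdiff_eq_zero (measurableSet_Ioi.prod measurableSet_Ioo) ?_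
    rintro ⟨r, θ⟩ ⟨⟨hr, hθ⟩, hn⟩
    refine h0 _ (lt_of_not_ge fun hle => hn ⟨⟨le_of_lt hr, hle⟩, hθ.1.le, hθ.2.le⟩)
  have hi₁ := hintegrable G₁ hG₁ fun p hp => by simp [G₁, hR p hp]
  have hi₂ := hintegrable G₂ hG₂ fun p hp => by simp [G₂, hR p hp]
  have heq : ∀ p ∈ polarCoord.target, p.1 • ((α + Complex.polarCoord.symm p - α)⁻¹ *
      dbar f (α + Complex.polarCoord.symm p)) = (1 / 2 : ℂ) * (G₁ p + Complex.I * G₂ p) := by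
    rintro ⟨r, θ⟩ ⟨hr, hθ⟩
    have hr' : (r : ℂ) ≠ 0 := by exact_mod_cast (ne_of_gt hr)
    have hsymm : Complex.polarCoord.symm (r, θ) = r * Complex.exp (θ * Complex.I) := by
      rw [Complex.polarCoord_symm_apply, Complex.exp_mul_I]
      simp
    have hlin (z : ℂ) (L : ℂ →L[ℝ] ℂ) : L z = z.re * L 1 + z.im * L Complex.I := by
      conv_lhs => rw [show z = z.re • (1 : ℂ) + z.im • Complex.I by simp]
      rw [map_add, map_smul, map_smul]
      simp
    rw [hsymm]
    simp only [G₁, G₂, dbar, add_sub_cancel_left]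
    generalize fderiv ℝ f (α + r * Complex.exp (θ * Complex.I)) = L
    rw [hlin (Complex.exp _), hlin (Complex.I * Complex.exp _)]
    have hcs : (Complex.exp (θ * Complex.I))⁻¹ = Real.cos θ - Real.sin θ * Complex.I := by
      rw [← Complex.exp_neg, ← neg_mul, Complex.exp_mul_I, Complex.cos_neg, Complex.sin_neg,
        Complex.ofReal_cos, Complex.ofReal_sin]
      ring
    rw [mul_inv, hcs, Complex.exp_mul_I, ← Complex.ofReal_cos, ← Complex.ofReal_sin]
    simp only [Complex.real_smul, smul_eq_mul, Complex.add_re, Complex.mul_re, Complex.add_im,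
      Complex.mul_im, Complex.ofReal_re, Complex.ofReal_im, Complex.I_re, Complex.I_im]
    push_cast
    field_simp
    linear_combination -Complex.sin θ * L Complex.I * Complex.I_sq
  rw [setIntegral_congr_fun polarCoord.open_target.measurableSet heq,
    show polarCoord.target = Ioi (0 : ℝ) ×ˢ Ioo (-Real.pi) Real.pi from rfl,
    integral_const_mul, integral_add hi₁ (hi₂.const_mul _), integral_const_mul]
  have hI₁ : ∫ p in Ioi (0 : ℝ) ×ˢ Ioo (-Real.pi) Real.pi, G₁ p = 2 * Real.pi * (-f α) := by
    rw [Measure.volume_eq_prod, ← setIntegral_prod_swap, setIntegral_prod]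
    · simp only [Prod.swap, G₁]
      simp_rw [integral_Ioi_radial_fderiv hf hs _ (Complex.exp_ne_zero _)]
      rw [setIntegral_const, Real.volume_real_Ioo_of_le (by linarith [Real.pi_pos]),
        Complex.real_smul]
      push_cast
      ring
    · rw [← Measure.volume_eq_prod]
      exact hi₁.swap
  have hI₂ : ∫ p in Ioi (0 : ℝ) ×ˢ Ioo (-Real.pi) Real.pi, G₂ p = 0 := by
    rw [Measure.volume_eq_prod, setIntegral_prod _ (by rwa [← Measure.volume_eq_prod])]
    refine setIntegral_eq_zero_of_forall_eq_zero fun r hr => ?_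
    exact integral_angular_fderiv hf r (ne_of_gt hr)
  rw [hI₁, hI₂]
  ring

end CauchyPompeiu

section Gluing

variable {h χ : ℂ → ℂ} {U : Set ℂ} {w : ℂ}

theorem dbar_eq_zero_of_notMem_tsupport (hw : w ∉ tsupport χ) : dbar χ w = 0 := by
  have : fderiv ℝ χ w = 0 := by
    by_contra hne
    exact hw (support_fderiv_subset ℝ hne)
  simp [dbar, this]

theorem continuous_dbar (hχ : ContDiff ℝ 1 χ) : Continuous (dbar χ) := by
  have := hχ.continuous_fderiv one_ne_zero
  unfold dbar
  fun_prop

theorem dbar_sum {ι : Type*} [Fintype ι] {χ : ι → ℂ → ℂ} (hχ : ∀ i, DifferentiableAt ℝ (χ i) w) :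
    dbar (fun w => ∑ i, χ i w) w = ∑ i, dbar (χ i) w := by
  simp only [dbar, fderiv_fun_sum fun i _ => hχ i, FunLike.coe_sum, Finset.sum_apply, Finset.smul_sum,
    Finset.sum_add_distrib, smul_add]

theorem contDiff_mul_of_tsupport_subset (hχ : ContDiff ℝ 1 χ) (hU : IsOpen U)
    (hs : tsupport χ ⊆ U) (hh : DifferentiableOn ℂ h U) :
    ContDiff ℝ 1 fun w => χ w * h w := by
  rw [contDiff_iff_contDiffAt]
  intro w
  by_cases hw : w ∈ tsupport χ
  · exact hχ.contDiffAt.mul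
      (((hh.contDiffOn hU).contDiffAt (hU.mem_nhds (hs hw))).restrict_scalars ℝ)
  · refine (contDiffAt_const (c := 0)).congr_of_eventuallyEq ?_
    filter_upwards [(isClosed_tsupport χ).isOpen_compl.mem_nhds hw] with z hz
    rw [image_eq_zero_of_notMem_tsupport hz, zero_mul]

theorem dbar_mul_of_tsupport_subset (hχ : ContDiff ℝ 1 χ) (hU : IsOpen U)
    (hs : tsupport χ ⊆ U) (hh : DifferentiableOn ℂ h U) (w : ℂ) :
    dbar (fun w => χ w * h w) w = dbar χ w * h w := by
  by_cases hw : w ∈ tsupport χ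
  · have hd : DifferentiableAt ℂ h w := hh.differentiableAt (hU.mem_nhds (hs hw))
    have hd' := hd.hasFDerivAt.restrictScalars ℝ
    have hm : fderiv ℝ (fun w => χ w * h w) w = _ :=
      (((hχ.differentiable one_ne_zero) w).hasFDerivAt.mul hd').fderiv
    have hI : fderiv ℂ h w Complex.I = Complex.I * fderiv ℂ h w 1 := by
      rw [← smul_eq_mul, ← map_smul, smul_eq_mul, mul_one]
    simp only [dbar, hm, add_apply, smul_apply,
      ContinuousLinearMap.coe_restrictScalars', smul_eq_mul, hI]
    linear_combination (1 / 2 : ℂ) * χ w * fderiv ℂ h w 1 * Complex.I_sq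
  · rw [dbar_eq_zero_of_notMem_tsupport hw, zero_mul]
    refine dbar_eq_zero_of_notMem_tsupport fun h' => hw ?_
    exact tsupport_mul_subset_left h'

variable {A : Type*} [NormedCommRing A] [NormedAlgebra ℂ A] {a : A}

theorem eqOn_of_sub_mul_eq (hss : ∀ x : A, (∀ φ : characterSpace ℂ A, φ x = 0) → x = 0)
    (hU : IsOpen U) {m₁ m₂ : ℂ → A} (h₁ : ContinuousOn m₁ U) (h₂ : ContinuousOn m₂ U)
    (h : ∀ w ∈ U, (algebraMap ℂ A w - a) * m₁ w = (algebraMap ℂ A w - a) * m₂ w) :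
    EqOn m₁ m₂ U := by
  intro w hw
  refine sub_eq_zero.1 (hss _ fun φ => ?_)
  have hφ (z) (hz : z ∈ U) (hne : z ≠ φ a) : φ (m₁ z - m₂ z) = 0 := by
    have := congrArg φ (h z hz)
    rw [map_mul, map_mul, map_sub, AlgHomClass.commutes] at this
    rw [map_sub, mul_left_cancel₀ (sub_ne_zero.2 hne) this, sub_self]
  by_cases hne : w = φ a
  · have hc : ContinuousAt (fun z => φ (m₁ z - m₂ z)) w :=
      (map_continuous φ).continuousAt.comp
        ((h₁.continuousAt (hU.mem_nhds hw)).sub (h₂.continuousAt (hU.mem_nhds hw)))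
    refine tendsto_nhds_unique (hc.mono_left (nhdsWithin_le_nhds (s := {w}ᶜ))) ?_
    refine tendsto_const_nhds.congr' ?_
    filter_upwards [mem_nhdsWithin_of_mem_nhds (hU.mem_nhds hw), self_mem_nhdsWithin] with z hz hz'
    exact (hφ z hz (hne ▸ hz')).symm
  · exact hφ w hw hne

/-- Local continuous quotients by `w - a` are unique, hence glue to a global one. -/
theorem exists_continuous_quotient
    (hss : ∀ x : A, (∀ φ : characterSpace ℂ A, φ x = 0) → x = 0) {g : ℂ → A}
    (hg : HasCompactSupport g)
    (hloc : ∀ w₀, ∃ (m : ℂ → A) (W : Set ℂ), IsOpen W ∧ w₀ ∈ W ∧ ContinuousOn m W ∧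
      ∀ w ∈ W, g w = (algebraMap ℂ A w - a) * m w) :
    ∃ k : ℂ → A, Continuous k ∧ HasCompactSupport k ∧
      ∀ w, g w = (algebraMap ℂ A w - a) * k w := by
  choose m W hWo hW hmc hm using hloc
  have hk : Continuous fun w => m w w := by
    rw [continuous_iff_continuousAt]
    intro w
    refine ((hmc w).continuousAt ((hWo w).mem_nhds (hW w))).congr ?_
    filter_upwards [(hWo w).mem_nhds (hW w)] with z hz
    exact eqOn_of_sub_mul_eq hss ((hWo w).inter (hWo z)) ((hmc w).mono inter_subset_left)
      ((hmc z).mono inter_subset_right) (fun y hy => (hm w y hy.1).symm.trans (hm z y hy.2))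
      ⟨hz, hW z⟩
  refine ⟨_, hk, ?_, fun w => hm w w (hW w)⟩
  refine HasCompactSupport.intro hg fun w hw => ?_
  refine eqOn_of_sub_mul_eq hss (a := a) (m₂ := 0) (isClosed_tsupport g).isOpen_compl
    hk.continuousOn continuousOn_const (fun z hz => ?_) hw
  rw [← hm z z (hW z), image_eq_zero_of_notMem_tsupport hz]
  simp

/-- Local idempotents modulo `w - a` on a finite cover glue to a global idempotent, via a partition
of unity and the Cauchy-Pompeiu formula. -/
theorem exists_idempotent_of_cover [CompleteSpace A]
    (hss : ∀ x : A, (∀ φ : characterSpace ℂ A, φ x = 0) → x = 0) {v : characterSpace ℂ A → ℂ}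
    {ι : Type*} [Fintype ι] {U : ι → Set ℂ} {e q : ι → ℂ → A} {χ : ι → ℂ → ℂ}
    (hχ : ∀ i, ContDiff ℝ 1 (χ i)) (hs : ∀ i, tsupport (χ i) ⊆ U i) (hsum : ∀ w, ∑ i, χ i w = 1)
    (hU : ∀ i, IsOpen (U i)) (he : ∀ i, DifferentiableOn ℂ (e i) (U i))
    (hq : ∀ i, ContinuousOn (q i) (U i))
    (heq : ∀ i, ∀ w ∈ U i, e i w ^ 2 - e i w = (algebraMap ℂ A w - a) * q i w)
    (hval : ∀ i, ∀ φ : characterSpace ℂ A, φ a ∈ U i → φ (e i (φ a)) = v φ)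
    (hcpt : ∀ i, HasCompactSupport (χ i) ∨ ∀ w, e i w = 0) :
    ∃ E : A, ∀ φ : characterSpace ℂ A, φ E = v φ := by
  have hdsum (w : ℂ) : ∑ i, dbar (χ i) w = 0 := by
    rw [← dbar_sum fun i => (hχ i).differentiable one_ne_zero w]
    simp [dbar, hsum]
  obtain ⟨C, hC, hCe⟩ : ∃ C : Set ℂ, IsCompact C ∧ ∀ i, ∀ w ∉ C, w ∉ tsupport (χ i) ∨ e i w = 0 := by
    have (i : ι) : ∃ C : Set ℂ, IsCompact C ∧ ∀ w ∉ C, w ∉ tsupport (χ i) ∨ e i w = 0 := by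
      rcases hcpt i with h | h
      · exact ⟨_, h, fun w hw => .inl hw⟩
      · exact ⟨∅, isCompact_empty, fun w _ => .inr (h w)⟩
    choose C hC hCe using this
    exact ⟨⋃ i, C i, isCompact_iUnion hC, fun i w hw => hCe i w fun h => hw (mem_iUnion_of_mem i h)⟩
  let g : ℂ → A := fun w => ∑ i, dbar (χ i) w • e i w
  have hg : HasCompactSupport g := HasCompactSupport.intro hC fun w hw =>
    Finset.sum_eq_zero fun i _ => by
      rcases hCe i w hw with h | h
      · rw [dbar_eq_zero_of_notMem_tsupport h, zero_smul]
      · rw [h, smul_zero]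
  obtain ⟨k, hkc, hks, hk⟩ := exists_continuous_quotient (a := a) hss hg fun w₀ => by
    obtain ⟨j, -, hj⟩ := Finset.exists_ne_zero_of_sum_ne_zero
      (by rw [hsum w₀]; exact one_ne_zero : ∑ i, χ i w₀ ≠ 0)
    have hjU : w₀ ∈ U j := hs j (subset_tsupport _ hj)
    have (i : ι) : ∃ (m : ℂ → A) (W : Set ℂ), IsOpen W ∧ w₀ ∈ W ∧ ContinuousOn m W ∧
        ∀ w ∈ W, dbar (χ i) w • (e i w - e j w) = (algebraMap ℂ A w - a) * m w := by
      by_cases hi : w₀ ∈ tsupport (χ i)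
      · have hiU := hs i hi
        obtain ⟨m, W, hWo, hW, hm, hmW⟩ := exists_local_quotient (a := a)
          (((hU i).inter (hU j)).mem_nhds ⟨hiU, hjU⟩)
          ((he i).continuousOn.mono inter_subset_left) ((he j).continuousOn.mono inter_subset_right)
          ((hq i).mono inter_subset_left) ((hq j).mono inter_subset_right)
          (fun w hw => heq i w hw.1) (fun w hw => heq j w hw.2)
          (fun φ hφ => by
            subst hφ
            rw [hval i φ hiU, hval j φ hjU])
        refine ⟨fun w => dbar (χ i) w • m w, W, hWo, hW,
          (continuous_dbar (hχ i)).continuousOn.smul hm, fun w hw => ?_⟩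
        rw [hmW w hw, mul_smul_comm]
      · refine ⟨0, (tsupport (χ i))ᶜ, (isClosed_tsupport _).isOpen_compl, hi, continuousOn_const,
          fun w hw => ?_⟩
        rw [dbar_eq_zero_of_notMem_tsupport hw, zero_smul, Pi.zero_apply, mul_zero]
    choose m W hWo hW hm hmW using this
    refine ⟨fun w => ∑ i, m i w, ⋂ i, W i, isOpen_iInter_of_finite hWo, mem_iInter.2 hW,
      continuousOn_finsetSum _ fun i _ => (hm i).mono (iInter_subset W i), fun w hw => ?_⟩
    rw [Finset.mul_sum, ← Finset.sum_congr rfl fun i _ => hmW i w (mem_iInter.1 hw i)]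
    simp only [g, smul_sub, Finset.sum_sub_distrib, ← Finset.sum_smul, hdsum, zero_smul, sub_zero]
  have hki : MeasureTheory.Integrable k := hkc.integrable_of_hasCompactSupport hks
  refine ⟨(-(Real.pi : ℂ)⁻¹) • ∫ w, k w, fun φ => ?_⟩
  let F : ℂ → ℂ := fun w => ∑ i, χ i w * φ (e i w)
  have hφe (i : ι) : DifferentiableOn ℂ (fun w => φ (e i w)) (U i) :=
    (CharacterSpace.toCLM φ).differentiable.comp_differentiableOn (he i)
  have hFi (i : ι) := contDiff_mul_of_tsupport_subset (hχ i) (hU i) (hs i) (hφe i)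
  have hF : ContDiff ℝ 1 F := ContDiff.sum fun i _ => hFi i
  have hFs : HasCompactSupport F := HasCompactSupport.intro hC fun w hw =>
    Finset.sum_eq_zero fun i _ => by
      rcases hCe i w hw with h | h
      · rw [image_eq_zero_of_notMem_tsupport h, zero_mul]
      · rw [h, map_zero, mul_zero]
  have hdF (w : ℂ) : dbar F w = (w - φ a) * φ (k w) := by
    rw [dbar_sum fun i => (hFi i).differentiable one_ne_zero w]
    have h := congrArg φ (hk w)
    rw [map_mul, map_sub, AlgHomClass.commutes] at h
    refine Eq.trans ?_ h
    simp only [g, map_sum, map_smul, smul_eq_mul,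
      dbar_mul_of_tsupport_subset (hχ _) (hU _) (hs _) (hφe _)]
  have hFa : F (φ a) = v φ := by
    have (i : ι) : χ i (φ a) * φ (e i (φ a)) = χ i (φ a) * v φ := by
      by_cases hi : χ i (φ a) = 0
      · rw [hi, zero_mul, zero_mul]
      · rw [hval i φ (hs i (subset_tsupport _ hi))]
    simp only [F, this, ← Finset.sum_mul, hsum, one_mul]
  have hintegral : φ (∫ w, k w) = ∫ w, φ (k w) :=
    ((CharacterSpace.toCLM φ).integral_comp_comm hki).symm
  have hcp := integral_inv_sub_mul_dbar (α := φ a) hF hFs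
  have hae : (fun w => (w - φ a)⁻¹ * dbar F w) =ᵐ[MeasureTheory.volume] fun w => φ (k w) := by
    filter_upwards [MeasureTheory.Measure.ae_ne MeasureTheory.volume (φ a)] with w hw
    rw [hdF, inv_mul_cancel_left₀ (sub_ne_zero.2 hw)]
  rw [MeasureTheory.integral_congr_ae hae, hFa] at hcp
  have hpi : (Real.pi : ℂ) ≠ 0 := by exact_mod_cast Real.pi_ne_zero
  rw [map_smul, hintegral, hcp, smul_eq_mul]
  field_simp

/-- An idempotent with prescribed character values exists if they can be approximated on each fibre
of `a`; this is a fibrewise form of Shilov's idempotent theorem. -/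
theorem exists_idempotent_of_local [CompleteSpace A]
    (hss : ∀ x : A, (∀ φ : characterSpace ℂ A, φ x = 0) → x = 0) {v : characterSpace ℂ A → ℂ}
    (hv : ∀ φ, v φ = 0 ∨ v φ = 1) (hvc : Continuous v)
    (hloc : ∀ c : ℂ, ∃ f : A, ∀ φ : characterSpace ℂ A, φ a = c → ‖φ f - v φ‖ ≤ 1 / 10) :
    ∃ E : A, ∀ φ : characterSpace ℂ A, φ E = v φ := by
  have (c : ℂ) := exists_local_idempotent (a := a) hv hvc (hloc c).choose_spec
  choose e q V hVo hcV hVb he hq heq hval using this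
  let σ : Set ℂ := range fun φ : characterSpace ℂ A => φ a
  have hσ : IsCompact σ :=
    isCompact_range ((WeakDual.eval_continuous a).comp continuous_subtype_val)
  obtain ⟨T, hT⟩ := hσ.elim_finite_subcover V hVo fun c _ => mem_iUnion_of_mem c (hcV c)
  let U : Option T → Set ℂ := fun i => i.elim σᶜ fun c => V c
  have hUo (i : Option T) : IsOpen (U i) := by
    cases i
    · exact hσ.isClosed.isOpen_compl
    · exact hVo _
  have hcov : (univ : Set ℂ) ⊆ ⋃ i, U i := fun w _ => by
    by_cases hw : w ∈ σ
    · obtain ⟨c, hc, hwc⟩ := mem_iUnion₂.1 (hT hw)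
      exact mem_iUnion_of_mem (some ⟨c, hc⟩) hwc
    · exact mem_iUnion_of_mem none hw
  obtain ⟨χ, hχ⟩ := SmoothPartitionOfUnity.exists_isSubordinate (modelWithCornersSelf ℝ ℂ)
    isClosed_univ U hUo hcov
  have hts (i : Option T) : tsupport (fun w => (χ i w : ℂ)) ⊆ U i :=
    (closure_mono (fun w hw h => hw (by simp [h]) :
      Function.support (fun w => (χ i w : ℂ)) ⊆ Function.support (χ i))).trans (hχ i)
  refine exists_idempotent_of_cover (a := a) hss (χ := fun i w => (χ i w : ℂ)) (U := U)
    (e := fun i => i.elim 0 fun c => e c) (q := fun i => i.elim 0 fun c => q c)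
    (fun i => ?_) hts (fun w => ?_) hUo ?_ ?_ ?_ ?_ ?_
  · exact Complex.ofRealCLM.contDiff.comp ((χ i).contMDiff.contDiff.of_le (by simp))
  · have h := χ.sum_eq_one (mem_univ w)
    rw [finsum_eq_sum_of_fintype] at h
    exact_mod_cast h
  · rintro (_ | c)
    · exact differentiableOn_const 0
    · exact he c
  · rintro (_ | c)
    · exact continuousOn_const
    · exact hq c
  · rintro (_ | c) w hw
    · simp
    · exact heq c w hw
  · rintro (_ | c) φ hφ
    · exact absurd ⟨φ, rfl⟩ hφ
    · exact hval c φ hφ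
  · rintro (_ | c)
    · exact .inr fun _ => rfl
    · exact .inl (HasCompactSupport.of_support_subset_isCompact (hVb c).isCompact_closure
        ((subset_tsupport _).trans ((hts (some c)).trans subset_closure)))

end Gluing

section Separation

variable {σ : Type*}

/-- A set of points of `ℂ^σ` containing every point at which polynomials obey all bounds they
satisfy on the set. -/
def ContainsPolyHull (K : Set (σ → ℂ)) : Prop :=
  ∀ z : σ → ℂ, (∀ (p : MvPolynomial σ ℂ) (C : ℝ), (∀ w ∈ K, ‖eval w p‖ ≤ C) → ‖eval z p‖ ≤ C) →
    z ∈ K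

theorem ContainsPolyHull.fibre {K : Set (σ → ℂ)} (hK : ContainsPolyHull K) (i : σ) (c : ℂ) :
    ContainsPolyHull (K ∩ {z | z i = c}) := by
  refine fun z hz => ⟨hK z fun p C h => hz p C fun w hw => h w hw.1, ?_⟩
  have h := hz (X i - C c) 0 fun w hw => by simp [show w i = c from hw.2]
  simpa [sub_eq_zero] using h

theorem exists_polynomial_separating_of_fibres {K₀ K₁ : Set (σ → ℂ)} (h₀ : IsCompact K₀)
    (h₁ : IsCompact K₁) (hd : Disjoint K₀ K₁) (hK : ContainsPolyHull (K₀ ∪ K₁)) (i : σ)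
    (hfib : ∀ c : ℂ, ∃ p : MvPolynomial σ ℂ, (∀ z ∈ K₀, z i = c → ‖eval z p‖ ≤ 1 / 10) ∧
      ∀ z ∈ K₁, z i = c → ‖eval z p - 1‖ ≤ 1 / 10) {ε : ℝ} (hε : 0 < ε) :
    ∃ p : MvPolynomial σ ℂ, (∀ z ∈ K₀, ‖eval z p‖ ≤ ε) ∧ ∀ z ∈ K₁, ‖eval z p - 1‖ ≤ ε := by
  classical
  rcases (K₀ ∪ K₁).eq_empty_or_nonempty with hemp | hne
  · rw [union_empty_iff] at hemp
    exact ⟨0, by simp [hemp.1], by simp [hemp.2]⟩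
  let K : Set (σ → ℂ) := K₀ ∪ K₁
  have : CompactSpace K := isCompact_iff_compactSpace.1 (h₀.union h₁)
  have : Nonempty K := hne.to_subtype
  let P : MvPolynomial σ ℂ →ₐ[ℂ] C(K, ℂ) :=
    aeval fun i => ⟨fun z : K => z.1 i, (continuous_apply i).comp continuous_subtype_val⟩
  have hP (p : MvPolynomial σ ℂ) (z : K) : P p z = eval z.1 p := by
    have h : (ContinuousMap.evalAlgHom ℂ ℂ z).comp P = aeval z.1 := by
      ext j
      simp [P]
    exact (DFunLike.congr_fun h p).trans (coe_aeval_eq_eval z.1 ▸ rfl)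
  let A : Subalgebra ℂ C(K, ℂ) := P.range.topologicalClosure
  have : CompleteSpace A := (Subalgebra.isClosed_topologicalClosure _).completeSpace_coe
  let ρ : MvPolynomial σ ℂ →ₐ[ℂ] A :=
    P.codRestrict A fun p => Subalgebra.le_topologicalClosure _ ⟨p, rfl⟩
  let pt : characterSpace ℂ A → σ → ℂ := fun φ j => φ (ρ (X j))
  have hpt (φ : characterSpace ℂ A) (p : MvPolynomial σ ℂ) : φ (ρ p) = eval (pt φ) p := by
    have h := aeval_unique ((CharacterSpace.toAlgHom φ).comp ρ)
    exact (DFunLike.congr_fun h p).trans (coe_aeval_eq_eval (pt φ) ▸ rfl)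
  have hptK (φ : characterSpace ℂ A) : pt φ ∈ K := by
    refine hK _ fun p C hC => ?_
    have hC0 : 0 ≤ C := (norm_nonneg _).trans (hC _ hne.some_mem)
    rw [← hpt]
    refine (norm_character_apply_le φ _).trans ?_
    have h1 : ‖ρ p‖ ≤ C := (ContinuousMap.norm_le _ hC0).2 fun z => by
      change ‖P p z‖ ≤ C
      rw [hP]
      exact hC z.1 z.2
    have h2 : ‖(1 : A)‖ ≤ 1 := (ContinuousMap.norm_le _ zero_le_one).2 fun z => by simp
    calc _ ≤ C * 1 := by gcongr
      _ = C := mul_one C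
  let ev (z : K) : characterSpace ℂ A :=
    CharacterSpace.equivAlgHom.symm ((ContinuousMap.evalAlgHom ℂ ℂ z).comp A.val)
  have hev (z : K) (f : A) : ev z f = f.1 z := rfl
  have hptev (z : K) : pt (ev z) = z.1 := by
    ext j
    change P (X j) z = z.1 j
    rw [hP, eval_X]
  have hptc : Continuous pt := continuous_pi fun j =>
    (WeakDual.eval_continuous _).comp continuous_subtype_val
  let v : characterSpace ℂ A → ℂ := (pt ⁻¹' K₁).indicator 1
  have hcl : IsClopen (pt ⁻¹' K₁) := by
    refine ⟨h₁.isClosed.preimage hptc, isClosed_compl_iff.1 ?_⟩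
    convert h₀.isClosed.preimage hptc using 1
    ext φ
    exact ⟨fun h => (hptK φ).resolve_right h, fun h h' => hd.le_bot ⟨h, h'⟩⟩
  obtain ⟨E, hE⟩ := exists_idempotent_of_local (A := A) (a := ρ (X i)) (v := v)
    (fun f hf => by
      ext z
      exact hf (ev z))
    (fun φ => Set.indicator_eq_zero_or_self _ _ φ)
    (hcl.continuous_indicator continuous_one) (fun c => by
      obtain ⟨p, hp₀, hp₁⟩ := hfib c
      refine ⟨ρ p, fun φ hφ => ?_⟩
      rw [hpt]
      by_cases hφ₁ : pt φ ∈ K₁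
      · rw [show v φ = 1 from indicator_of_mem (s := pt ⁻¹' K₁) hφ₁ 1]
        exact hp₁ _ hφ₁ hφ
      · rw [show v φ = 0 from indicator_of_notMem (s := pt ⁻¹' K₁) hφ₁ 1, sub_zero]
        exact hp₀ _ ((hptK φ).resolve_right hφ₁) hφ)
  obtain ⟨_, ⟨p, rfl⟩, hp⟩ := Metric.mem_closure_iff.1 E.2 ε hε
  have hb (z : K) : ‖eval z.1 p - v (ev z)‖ ≤ ε := by
    rw [← hE, hev, ← hP, ← dist_eq_norm, dist_comm]
    exact (ContinuousMap.dist_apply_le_dist z).trans hp.le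
  refine ⟨p, fun z hz => ?_, fun z hz => ?_⟩
  · have h := hb ⟨z, .inl hz⟩
    rwa [show v (ev ⟨z, .inl hz⟩) = 0 from indicator_of_notMem (s := pt ⁻¹' K₁) (fun h' => by
      rw [mem_preimage, hptev] at h'
      exact hd.le_bot ⟨hz, h'⟩) 1, sub_zero] at h
  · have h := hb ⟨z, .inr hz⟩
    rwa [show v (ev ⟨z, .inr hz⟩) = 1 from indicator_of_mem (s := pt ⁻¹' K₁) (by
      rw [mem_preimage, hptev]
      exact hz) 1] at h

/-- Disjoint compact sets whose union is polynomially convex are separated by polynomials. -/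
theorem exists_polynomial_separating [Finite σ] {K₀ K₁ : Set (σ → ℂ)} (h₀ : IsCompact K₀)
    (h₁ : IsCompact K₁) (hd : Disjoint K₀ K₁) (hK : ContainsPolyHull (K₀ ∪ K₁)) {ε : ℝ}
    (hε : 0 < ε) :
    ∃ p : MvPolynomial σ ℂ, (∀ z ∈ K₀, ‖eval z p‖ ≤ ε) ∧ ∀ z ∈ K₁, ‖eval z p - 1‖ ≤ ε := by
  classical
  have := Fintype.ofFinite σ
  suffices H : ∀ (T : Finset σ) (K₀ K₁ : Set (σ → ℂ)), IsCompact K₀ → IsCompact K₁ →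
      Disjoint K₀ K₁ → ContainsPolyHull (K₀ ∪ K₁) →
      (∀ i ∉ T, ∀ z ∈ K₀ ∪ K₁, ∀ w ∈ K₀ ∪ K₁, z i = w i) → ∀ ε > 0,
      ∃ p : MvPolynomial σ ℂ, (∀ z ∈ K₀, ‖eval z p‖ ≤ ε) ∧ ∀ z ∈ K₁, ‖eval z p - 1‖ ≤ ε from
    H Finset.univ K₀ K₁ h₀ h₁ hd hK (fun i hi => absurd (Finset.mem_univ i) hi) ε hε
  intro T
  induction T using Finset.induction_on with
  | empty =>
    intro K₀ K₁ _ _ hd _ hc ε hε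
    rcases K₀.eq_empty_or_nonempty with rfl | ⟨z, hz⟩
    · exact ⟨1, by simp, by simp [hε.le]⟩
    · refine ⟨0, by simp [hε.le], fun w hw => ?_⟩
      have h : z = w := funext fun i => hc i (by simp) z (.inl hz) w (.inr hw)
      exact (hd.le_bot ⟨hz, h ▸ hw⟩).elim
  | insert i T _ ih =>
    intro K₀ K₁ h₀ h₁ hd hK hc ε hε
    refine exists_polynomial_separating_of_fibres h₀ h₁ hd hK i (fun c => ?_) hε
    have hcl : IsClosed {z : σ → ℂ | z i = c} :=
      isClosed_eq (continuous_apply i) continuous_const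
    obtain ⟨p, hp₀, hp₁⟩ := ih (K₀ ∩ {z | z i = c}) (K₁ ∩ {z | z i = c}) (h₀.inter_right hcl)
      (h₁.inter_right hcl) (hd.mono inter_subset_left inter_subset_left)
      (by rw [← union_inter_distrib_right]; exact hK.fibre i c) (fun j hj z hz w hw => by
        rw [← union_inter_distrib_right] at hz hw
        by_cases hji : j = i
        · subst hji
          exact Eq.trans hz.2 hw.2.symm
        · exact hc j (by simp [hji, hj]) z hz.1 w hw.1) (1 / 10) (by norm_num)
    exact ⟨p, fun z hz hzc => hp₀ z ⟨hz, hzc⟩, fun z hz hzc => hp₁ z ⟨hz, hzc⟩⟩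

end Separation

end PolynomialSeparation

section Product

variable {N n : ℕ}

/-- The coordinates of a point of `ℂᴺ × ℂⁿ`. -/
def sumCoord (z : EuclideanSpace ℂ (Fin N) × EuclideanSpace ℂ (Fin n)) : Fin N ⊕ Fin n → ℂ :=
  Sum.elim (fun i => z.1 i) (fun j => z.2 j)

theorem continuous_sumCoord : Continuous (sumCoord (N := N) (n := n)) := by
  refine continuous_pi ?_
  rintro (i | j)
  · exact (EuclideanSpace.proj i).continuous.comp continuous_fst
  · exact (EuclideanSpace.proj j).continuous.comp continuous_snd

theorem sumCoord_injective : Function.Injective (sumCoord (N := N) (n := n)) := by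
  intro z w h
  refine Prod.ext (PiLp.ext fun i => ?_) (PiLp.ext fun j => ?_)
  · exact congrFun h (Sum.inl i)
  · exact congrFun h (Sum.inr j)

theorem sumCoord_surjective : Function.Surjective (sumCoord (N := N) (n := n)) := by
  refine fun u => ⟨(WithLp.toLp 2 fun i => u (.inl i), WithLp.toLp 2 fun j => u (.inr j)), ?_⟩
  ext (i | j) <;> rfl

variable {K : Set (EuclideanSpace ℂ (Fin N) × EuclideanSpace ℂ (Fin n))}

theorem mem_polyHull2_iff (hK : IsCompact K)
    {z : EuclideanSpace ℂ (Fin N) × EuclideanSpace ℂ (Fin n)} :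
    z ∈ polyHull2 K ↔ ∀ (p : MvPolynomial (Fin N ⊕ Fin n) ℂ) (C : ℝ),
      (∀ w ∈ K, ‖eval (sumCoord w) p‖ ≤ C) → ‖eval (sumCoord z) p‖ ≤ C := by
  constructor
  · intro hz p C hC
    rcases K.eq_empty_or_nonempty with rfl | hne
    · have h := hz 1
      rw [image_empty, Real.sSup_empty, map_one, norm_one] at h
      norm_num at h
    · refine (hz p).trans (csSup_le (hne.image _) ?_)
      rintro _ ⟨w, hw, rfl⟩
      exact hC w hw
  · intro hz p
    refine hz p _ fun w hw => le_csSup (IsCompact.bddAbove (hK.image ?_)) (mem_image_of_mem _ hw)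
    exact ((continuous_eval p).comp continuous_sumCoord).norm

theorem subset_polyHull2 (hK : IsCompact K) : K ⊆ polyHull2 K := fun _ hz =>
  (mem_polyHull2_iff hK).2 fun _ _ h => h _ hz

theorem IsPolyConvex2.containsPolyHull (hK : IsCompact K) (h : IsPolyConvex2 K) :
    ContainsPolyHull (sumCoord '' K) := by
  intro u hu
  obtain ⟨z, rfl⟩ := sumCoord_surjective u
  refine mem_image_of_mem _ (h ▸ (mem_polyHull2_iff hK).2 fun p C hC => hu p C ?_)
  rintro _ ⟨w, hw, rfl⟩
  exact hC w hw

theorem IsPolyConvex2.image_smul_snd (hK : IsCompact K) (h : IsPolyConvex2 K) {t : ℂ}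
    (ht : t ≠ 0) : IsPolyConvex2 ((fun p => (p.1, t • p.2)) '' K) := by
  have hc : IsCompact ((fun p => (p.1, t • p.2)) '' K) := hK.image (by fun_prop)
  refine (subset_polyHull2 hc).antisymm' fun z hz => ?_
  rw [mem_polyHull2_iff hc] at hz
  refine ⟨(z.1, t⁻¹ • z.2), ?_, by simp [smul_smul, ht]⟩
  rw [← show polyHull2 K = K from h, mem_polyHull2_iff hK]
  intro p C hC
  have hq (w : EuclideanSpace ℂ (Fin N) × EuclideanSpace ℂ (Fin n)) :
      eval (sumCoord w) (bind₁ (Sum.elim (fun i => X (.inl i))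
        fun j => MvPolynomial.C t⁻¹ * X (.inr j)) p) = eval (sumCoord (w.1, t⁻¹ • w.2)) p := by
    rw [eval, eval₂Hom_bind₁]
    congr 2
    ext (i | j) <;> simp [sumCoord]
  rw [← hq]
  refine hz _ C ?_
  rintro _ ⟨w, hw, rfl⟩
  rw [hq]
  simpa [smul_smul, ht] using hC w hw

/-- The linear form `⟪ζ₀, ·⟫` of the second factor, as a polynomial. -/
def innerSndPolynomial (N : ℕ) (ζ₀ : EuclideanSpace ℂ (Fin n)) : MvPolynomial (Fin N ⊕ Fin n) ℂ :=
  ∑ j, C (starRingEnd ℂ (ζ₀ j)) * X (.inr j)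

theorem eval_innerSndPolynomial (ζ₀ : EuclideanSpace ℂ (Fin n))
    (w : EuclideanSpace ℂ (Fin N) × EuclideanSpace ℂ (Fin n)) :
    eval (sumCoord w) (innerSndPolynomial N ζ₀) = inner ℂ ζ₀ w.2 := by
  simp [innerSndPolynomial, sumCoord, PiLp.inner_apply, mul_comm]

/-- Shrinking the ball in a union `(L × B) ∪ Θ` that is polynomially convex. -/
theorem IsPolyConvex2.prod_closedBall_union_mono {L : Set (EuclideanSpace ℂ (Fin N))}
    {Θ : Set (EuclideanSpace ℂ (Fin N) × EuclideanSpace ℂ (Fin n))} {r R : ℝ}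
    (hL : IsCompact L) (hΘ : IsCompact Θ) (hr : 0 < r) (hrR : r ≤ R)
    (hd : Disjoint Θ (L ×ˢ closedBall 0 R)) (h : IsPolyConvex2 (L ×ˢ closedBall 0 R ∪ Θ)) :
    IsPolyConvex2 (L ×ˢ closedBall 0 r ∪ Θ) := by
  have hD : IsCompact (L ×ˢ closedBall (0 : EuclideanSpace ℂ (Fin n)) R) :=
    hL.prod (ProperSpace.isCompact_closedBall _ _)
  have hc : IsCompact (L ×ˢ closedBall (0 : EuclideanSpace ℂ (Fin n)) r ∪ Θ) :=
    (hL.prod (ProperSpace.isCompact_closedBall _ _)).union hΘ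
  refine (subset_polyHull2 hc).antisymm' fun z hz => ?_
  rw [mem_polyHull2_iff hc] at hz
  have hzR : z ∈ L ×ˢ closedBall 0 R ∪ Θ := by
    rw [← show polyHull2 (L ×ˢ closedBall 0 R ∪ Θ) = _ from h, mem_polyHull2_iff (hD.union hΘ)]
    exact fun p C hC => hz p C fun w hw => hC w
      (union_subset_union_left _ (prod_mono_right (closedBall_subset_closedBall hrR)) hw)
  rcases hzR with hzD | hzΘ
  swap
  · exact .inr hzΘ
  refine .inl ⟨hzD.1, mem_closedBall_zero_iff.2 ?_⟩
  by_contra! hlt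
  obtain ⟨M, hM0, hM⟩ : ∃ M : ℝ, 0 ≤ M ∧ ∀ w ∈ Θ, ‖w.2‖ ≤ M := by
    obtain ⟨M, hM⟩ := (hΘ.image continuous_snd).isBounded.exists_norm_le
    exact ⟨max M 0, le_max_right _ _,
      fun w hw => (hM _ (mem_image_of_mem _ hw)).trans (le_max_left _ _)⟩
  set ρ := ‖z.2‖ with hρ
  obtain ⟨ε, hε, hε'⟩ : ∃ ε : ℝ, 0 < ε ∧ ε * (2 * (ρ + r + M)) = ρ - r :=
    ⟨(ρ - r) / (2 * (ρ + r + M)), div_pos (by linarith) (by linarith),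
      div_mul_cancel₀ _ (by linarith)⟩
  obtain ⟨p, hp₀, hp₁⟩ := exists_polynomial_separating (hΘ.image continuous_sumCoord)
    (hD.image continuous_sumCoord) ((disjoint_image_iff sumCoord_injective).2 hd)
    (by rw [← image_union, union_comm]; exact h.containsPolyHull (hD.union hΘ)) hε
  have hp₁' (w) (hw : w ∈ L ×ˢ closedBall 0 R) :
      1 - ε ≤ ‖eval (sumCoord w) p‖ ∧ ‖eval (sumCoord w) p‖ ≤ 1 + ε := by
    have h1 := abs_le.1 ((abs_norm_sub_norm_le _ _).trans (hp₁ _ (mem_image_of_mem _ hw)))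
    rw [norm_one] at h1
    exact ⟨by linarith, by linarith⟩
  have hbound := hz (p * innerSndPolynomial N z.2) (max ((1 + ε) * (ρ * r)) (ε * (ρ * M))) (by
    rintro w (hw | hw) <;> rw [map_mul, norm_mul, eval_innerSndPolynomial]
    · refine le_max_of_le_left ?_
      have h2 := (hp₁' w (prod_mono_right (closedBall_subset_closedBall hrR) hw)).2
      have h3 : ‖w.2‖ ≤ r := mem_closedBall_zero_iff.1 hw.2
      have h4 : ‖inner ℂ z.2 w.2‖ ≤ ρ * r := (norm_inner_le_norm _ _).trans (by gcongr)
      gcongr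
    · refine le_max_of_le_right ?_
      have h2 := hp₀ _ (mem_image_of_mem _ hw)
      have h4 : ‖inner ℂ z.2 w.2‖ ≤ ρ * M :=
        (norm_inner_le_norm _ _).trans (by gcongr; exact hM w hw)
      gcongr)
  have hinner : ‖inner ℂ z.2 z.2‖ = ρ * ρ := by
    rw [inner_self_eq_norm_sq_to_K]
    simp [hρ, sq]
  rw [map_mul, norm_mul, eval_innerSndPolynomial, hinner] at hbound
  have hlow : (1 - ε) * (ρ * ρ) ≤ ‖eval (sumCoord z) p‖ * (ρ * ρ) := by
    gcongr
    exact (hp₁' z hzD).1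
  have hρ0 : 0 < ρ := hr.trans hlt
  have hεM : 0 ≤ ε * M := by positivity
  have hεr : 0 < ε * r := by positivity
  rcases le_max_iff.1 (hlow.trans hbound) with h5 | h5
  · have : (1 - ε) * ρ ≤ (1 + ε) * r := le_of_mul_le_mul_right (by linarith) hρ0
    linarith
  · have : (1 - ε) * ρ ≤ ε * M := le_of_mul_le_mul_right (by linarith) hρ0
    linarith

end Product

/-- Let `L ⊆ ℂᴺ` be compact, `B ⊆ ℂⁿ` a closed ball centred at `0`, and `S ⊆ ℂ^{N+n}` compact
with `(L × B) ∪ S` polynomially convex and `S ∩ (L × B) = ∅`. Then for every `t ∈ [1, ∞)`, with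
`θ_t(z,ζ) = (z, tζ)`, the set `(L × B) ∪ θ_t(S)` is polynomially convex and
`θ_t(S) ∩ (L × B) = ∅`, provided `S ∩ (L × tB) = ∅`. -/
theorem stmt_8 (N n : ℕ) (L : Set (EuclideanSpace ℂ (Fin N))) (r : ℝ) (hr : 0 < r)
    (S : Set (EuclideanSpace ℂ (Fin N) × EuclideanSpace ℂ (Fin n)))
    (hLc : IsCompact L) (hSc : IsCompact S)
    (hpc : IsPolyConvex2 ((L ×ˢ closedBall (0 : EuclideanSpace ℂ (Fin n)) r) ∪ S))
    (hdisj : S ∩ (L ×ˢ closedBall (0 : EuclideanSpace ℂ (Fin n)) r) = ∅)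
    (t : ℝ) (ht : 1 ≤ t)
    (hdisj' : S ∩ (L ×ˢ closedBall (0 : EuclideanSpace ℂ (Fin n)) (t * r)) = ∅) :
    IsPolyConvex2 ((L ×ˢ closedBall (0 : EuclideanSpace ℂ (Fin n)) r) ∪
        ((fun p : EuclideanSpace ℂ (Fin N) × EuclideanSpace ℂ (Fin n) =>
          (p.1, (t : ℂ) • p.2)) '' S)) ∧
      ((fun p : EuclideanSpace ℂ (Fin N) × EuclideanSpace ℂ (Fin n) =>
          (p.1, (t : ℂ) • p.2)) '' S) ∩
        (L ×ˢ closedBall (0 : EuclideanSpace ℂ (Fin n)) r) = ∅ := by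
  have htr : r ≤ t * r := le_mul_of_one_le_left hr.le ht
  have ht0 : 0 < t := one_pos.trans_le ht
  have htn : ‖(t : ℂ)‖ = t := by rw [Complex.norm_real, Real.norm_of_nonneg ht0.le]
  set θ : EuclideanSpace ℂ (Fin N) × EuclideanSpace ℂ (Fin n) → _ :=
    fun p => (p.1, (t : ℂ) • p.2) with hθ
  have hmem (s : EuclideanSpace ℂ (Fin N) × EuclideanSpace ℂ (Fin n)) :
      θ s ∈ L ×ˢ closedBall (0 : EuclideanSpace ℂ (Fin n)) (t * r) ↔
        s ∈ L ×ˢ closedBall (0 : EuclideanSpace ℂ (Fin n)) r := by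
    simp only [hθ, mem_prod, mem_closedBall_zero_iff, norm_smul, htn, mul_le_mul_iff_right₀ ht0]
  have hd : Disjoint (θ '' S) (L ×ˢ closedBall (0 : EuclideanSpace ℂ (Fin n)) (t * r)) := by
    rw [Set.disjoint_left]
    rintro _ ⟨s, hs, rfl⟩ h
    exact hdisj.le ⟨hs, (hmem s).1 h⟩
  have himage : θ '' (L ×ˢ closedBall (0 : EuclideanSpace ℂ (Fin n)) r) =
      L ×ˢ closedBall (0 : EuclideanSpace ℂ (Fin n)) (t * r) := by
    refine Subset.antisymm (image_subset_iff.2 fun s hs => (hmem s).2 hs) fun z hz => ?_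
    have hz' : θ (z.1, (t : ℂ)⁻¹ • z.2) = z :=
      Prod.ext rfl (smul_inv_smul₀ (by exact_mod_cast ht0.ne') z.2)
    exact ⟨_, (hmem _).1 (hz'.symm ▸ hz), hz'⟩
  have hpc' := hpc.image_smul_snd ((hLc.prod (ProperSpace.isCompact_closedBall _ _)).union hSc)
    (t := (t : ℂ)) (by exact_mod_cast ht0.ne')
  rw [image_union, himage] at hpc'
  refine ⟨hpc'.prod_closedBall_union_mono hLc (hSc.image (by fun_prop)) hr htr hd, ?_⟩
  exact Set.disjoint_iff_inter_eq_empty.1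
    (hd.mono_right (prod_mono_right (closedBall_subset_closedBall htr)))
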